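/- arXiv:math/9905184 — 2 statements merged into one kernel-verified Lean document; each statement's English description precedes it below -/
import Mathlib

section
/- Let d, r, s be positive integers with s > r, and let G_{ij}(M) := φ(M)_{11} · φ(M)_{i1}^{-1} · φ(M)_{ij} · φ(M)_{1j}^{-1} be defined for rd×sd complex matrices M as above (with φ(M) = A^{-1}B for M = (A B), A invertible). For a positive integer k and multi-indices α ∈ {2,…,r}^k and β ∈ {2,…,s−r}^k define I_{αβ}(M) := Tr( G_{α_1 β_1}(M) · G_{α_2 β_2}(M) ⋯ G_{α_k β_k}(M) ). Then I_{αβ} is a joint invariant: for every g ∈ GL_{rd}(ℂ) and every block-diagonal H = diag(h_1,…,h_s) with h_k ∈ GL_d(ℂ), whenever both sides are defined one has I_{αβ}(g·M·H) = I_{αβ}(M). -/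
noncomputable section

/-- The left `rd × rd` square part `A` of an `rd × sd` matrix `M = (A B)`
written in `d × d` blocks. -/
def Asq {d r s : ℕ} (hrs : r ≤ s) (M : Matrix (Fin r × Fin d) (Fin s × Fin d) ℂ) :
    Matrix (Fin r × Fin d) (Fin r × Fin d) ℂ :=
  Matrix.of fun p q => M p (Fin.castLE hrs q.1, q.2)

/-- The column index `r + j` (0-based) of the `j`-th block column of `B`. -/
def colIdx (r s : ℕ) (j : Fin (s - r)) : Fin s :=
  ⟨r + j, by have := j.isLt; omega⟩

/-- The `d × d` block of `φ(M) = A⁻¹ B` in block row `i` and block column `j`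
(both 0-based). -/
def Phiblk {d r s : ℕ} (hrs : r ≤ s) (M : Matrix (Fin r × Fin d) (Fin s × Fin d) ℂ)
    (i : Fin r) (j : Fin (s - r)) : Matrix (Fin d) (Fin d) ℂ :=
  Matrix.of fun a b => ((Asq hrs M)⁻¹ * M) (i, a) (colIdx r s j, b)

/-- `G_{ij}(M) = φ(M)₁₁ · φ(M)ᵢ₁⁻¹ · φ(M)ᵢⱼ · φ(M)₁ⱼ⁻¹` (0-based indices). -/
def Gmap {d r s : ℕ} (hrs : r ≤ s) (hr : 0 < r) (hsr : 0 < s - r)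
    (M : Matrix (Fin r × Fin d) (Fin s × Fin d) ℂ) (i : Fin r) (j : Fin (s - r)) :
    Matrix (Fin d) (Fin d) ℂ :=
  Phiblk hrs M ⟨0, hr⟩ ⟨0, hsr⟩ * (Phiblk hrs M i ⟨0, hsr⟩)⁻¹ *
    Phiblk hrs M i j * (Phiblk hrs M ⟨0, hr⟩ j)⁻¹

/-- The `sd × sd` block-diagonal matrix `diag (h 0, …, h (s-1))`. -/
def blockDiag {s d : ℕ} (h : Fin s → Matrix (Fin d) (Fin d) ℂ) :
    Matrix (Fin s × Fin d) (Fin s × Fin d) ℂ :=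
  Matrix.of fun p q => if p.1 = q.1 then h p.1 p.2 q.2 else 0

/-!
An `rd × sd` matrix is an `r × s` matrix over the noncommutative ring of `d × d` matrices, and
`H = diag(h₁, …, h_s)` is then an honest diagonal matrix. Left multiplication by `g` cancels in
`A⁻¹ B`, so `φ(g M H)ᵢⱼ = hᵢ⁻¹ φ(M)ᵢⱼ hᵣ₊ⱼ`. In the cross-ratio `Gᵢⱼ` all scalings except that
of the first row cancel, hence every `Gᵢⱼ` is conjugated by the same `h₁`, which the trace of a
product does not see.
-/

open scoped Ring

section CrossRatio

variable {R S m n : Type*}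

/-- The noncommutative cross-ratio of rows `i₀`, `i` and columns `j₀`, `j` of a matrix. `Gmap` is
this cross-ratio for the matrix of `d × d` blocks of `φ(M)`, with the first row and column as base
points. It is `0` unless both inverted entries are units. -/
def crossRatio [MonoidWithZero R] (X : Matrix m n R) (i₀ : m) (j₀ : n) (i : m) (j : n) : R :=
  X i₀ j₀ * (X i j₀)⁻¹ʳ * X i j * (X i₀ j)⁻¹ʳ

theorem ringInverse_units_mul_mul_units [MonoidWithZero R] (u v : Rˣ) (a : R) :
    (u * a * v : R)⁻¹ʳ = ↑v⁻¹ * a⁻¹ʳ * ↑u⁻¹ := by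
  rw [Ring.inverse_mul (.inr v.isUnit), Ring.inverse_mul (.inl u.isUnit), Ring.inverse_unit,
    Ring.inverse_unit, mul_assoc]

theorem ringInverse_mulEquiv_apply [MonoidWithZero R] [MonoidWithZero S]
    (f : R ≃* S) (a : R) : (f a)⁻¹ʳ = f a⁻¹ʳ := by
  by_cases ha : IsUnit a
  · obtain ⟨u, rfl⟩ := ha
    rw [Ring.inverse_unit, ← Units.coe_mapEquiv, Ring.inverse_unit]
    rfl
  · rw [Ring.inverse_non_unit _ ha, Ring.inverse_non_unit _ (by rwa [isUnit_map_iff]), map_zero]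

theorem crossRatio_units_mul_mul_units [MonoidWithZero R] (X : Matrix m n R)
    (u : m → Rˣ) (v : n → Rˣ) (i₀ : m) (j₀ : n) (i : m) (j : n) :
    crossRatio (Matrix.of fun i j ↦ (u i * X i j * v j : R)) i₀ j₀ i j =
      u i₀ * crossRatio X i₀ j₀ i j * ↑(u i₀)⁻¹ := by
  simp only [crossRatio, Matrix.of_apply, ringInverse_units_mul_mul_units]
  simp only [mul_assoc, Units.mul_inv_cancel_left, Units.inv_mul_cancel_left]

theorem map_prod_ofFn_units_conj [Monoid R] (τ : R → S) (hτ : ∀ x y, τ (x * y) = τ (y * x))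
    (u : Rˣ) {k : ℕ} (x : Fin k → R) :
    τ (List.ofFn fun l ↦ u * x l * ↑u⁻¹).prod = τ (List.ofFn x).prod := by
  have conj_prod : (List.ofFn fun l ↦ u * x l * ↑u⁻¹).prod = u * (List.ofFn x).prod * ↑u⁻¹ := by
    simpa only [ConjAct.units_smul_def, ConjAct.ofConjAct_toConjAct, List.map_ofFn,
      Function.comp_def] using
      (List.smul_prod' (r := ConjAct.toConjAct u) (l := List.ofFn x)).symm
  rw [conj_prod, hτ, Units.inv_mul_cancel_left]

end CrossRatio

section BlockChart

theorem submatrix_mul_diagonal {R l n o p : Type*} [NonUnitalNonAssocSemiring R] [Fintype n]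
    [DecidableEq n] [Fintype p] [DecidableEq p] (M : Matrix o p R) (h : p → R) (f : l → o)
    (e : n → p) :
    (M * Matrix.diagonal h).submatrix f e =
      M.submatrix f e * Matrix.diagonal fun j ↦ h (e j) := by
  ext i j
  simp only [Matrix.submatrix_apply, Matrix.mul_diagonal]

variable {R S m n p : Type*} [Semiring R] [Fintype m] [DecidableEq m]

/-- The matrix `A⁻¹ B`, where `A` and `B` consist of the columns of `M` selected by `e` and `f`.
It is `φ(M)` when the entries of `M` are its `d × d` blocks, `e` selects the first `r` block
columns and `f` the others. As the inverse of a noninvertible `A` is `0`, so is `A⁻¹ B` then. -/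
def affineChart (e : m → p) (f : n → p) (M : Matrix m p R) : Matrix m n R :=
  ((M.submatrix id e)⁻¹ʳ * M).submatrix id f

theorem ringInverse_units_mul_mul_diagonal (g : (Matrix m m R)ˣ) (A : Matrix m m R)
    (u : m → Rˣ) :
    ((g : Matrix m m R) * A * Matrix.diagonal fun i ↦ (u i : R))⁻¹ʳ =
      Matrix.diagonal (fun i ↦ (↑(u i)⁻¹ : R)) * A⁻¹ʳ * (↑g⁻¹ : Matrix m m R) :=
  ringInverse_units_mul_mul_units g
    (Units.map (Matrix.diagonalRingHom m R).toMonoidHom (MulEquiv.piUnits.symm u)) A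

variable [Fintype p] [DecidableEq p]

theorem affineChart_units_mul_mul_diagonal (e : m → p) (f : n → p) (M : Matrix m p R)
    (g : (Matrix m m R)ˣ) (h : p → Rˣ) :
    affineChart e f ((g : Matrix m m R) * M * Matrix.diagonal fun t ↦ (h t : R)) =
      Matrix.of fun i j ↦ (↑(h (e i))⁻¹ * affineChart e f M i j * h (f j) : R) := by
  have left_block :
      ((g : Matrix m m R) * M * Matrix.diagonal fun t ↦ (h t : R)).submatrix id e =
        (g : Matrix m m R) * M.submatrix id e * Matrix.diagonal fun i ↦ (h (e i) : R) :=
    submatrix_mul_diagonal _ _ _ _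
  have cancel_g : (↑g⁻¹ : Matrix m m R) * ((g : Matrix m m R) * M) = M := by
    rw [← Matrix.mul_assoc, Units.inv_mul, Matrix.one_mul]
  ext i j
  rw [affineChart, left_block, ringInverse_units_mul_mul_diagonal, ← Matrix.mul_assoc,
    Matrix.mul_assoc _ _ (_ * M), cancel_g, Matrix.mul_assoc _ _ M,
    Matrix.submatrix_apply, Matrix.mul_diagonal, Matrix.diagonal_mul]
  rfl

theorem stmt15_general (τ : R → S) (hτ : ∀ x y, τ (x * y) = τ (y * x)) (e : m → p) (f : n → p)
    (i₀ : m) (j₀ : n) {k : ℕ} (α : Fin k → m) (β : Fin k → n) (M : Matrix m p R)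
    (_hA : IsUnit (M.submatrix id e))
    (_hα₀ : ∀ l, IsUnit (affineChart e f M (α l) j₀))
    (_h₀β : ∀ l, IsUnit (affineChart e f M i₀ (β l)))
    (g : (Matrix m m R)ˣ) (h : p → Rˣ) :
    τ (List.ofFn fun l ↦ crossRatio
        (affineChart e f ((g : Matrix m m R) * M * Matrix.diagonal fun t ↦ (h t : R)))
        i₀ j₀ (α l) (β l)).prod =
      τ (List.ofFn fun l ↦ crossRatio (affineChart e f M) i₀ j₀ (α l) (β l)).prod := by
  simp only [affineChart_units_mul_mul_diagonal,
    crossRatio_units_mul_mul_units _ (fun i ↦ (h (e i))⁻¹) fun j ↦ h (f j)]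
  exact map_prod_ofFn_units_conj τ hτ (h (e i₀))⁻¹ _

end BlockChart

section Comp

theorem comp_symm_mul {I J K N R : Type*} [NonUnitalSemiring R] [Fintype J] [Fintype K]
    (X : Matrix (I × K) (J × K) R) (Y : Matrix (J × K) (N × K) R) :
    (Matrix.comp I N K K R).symm (X * Y) =
      (Matrix.comp I J K K R).symm X * (Matrix.comp J N K K R).symm Y := by
  ext i j k l
  simp only [Matrix.comp_symm_apply, Matrix.mul_apply, Fintype.sum_prod_type, Matrix.sum_apply]

theorem comp_symm_inv {I K R : Type*} [CommRing R] [Fintype I] [DecidableEq I]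
    [Fintype K] [DecidableEq K] (A : Matrix (I × K) (I × K) R) :
    (Matrix.comp I I K K R).symm A⁻¹ = ((Matrix.comp I I K K R).symm A)⁻¹ʳ := by
  rw [Matrix.nonsing_inv_eq_ringInverse]
  exact (ringInverse_mulEquiv_apply (Matrix.compRingEquiv I K R).symm.toMulEquiv A).symm

variable {d r s : ℕ}

theorem comp_symm_blockDiag (h : Fin s → Matrix (Fin d) (Fin d) ℂ) :
    (Matrix.comp _ _ _ _ ℂ).symm (blockDiag h) = Matrix.diagonal h := by
  ext i j a b
  by_cases hij : i = j <;> simp [blockDiag, hij]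

theorem Phiblk_eq_affineChart (hrs : r ≤ s) (M : Matrix (Fin r × Fin d) (Fin s × Fin d) ℂ)
    (i : Fin r) (j : Fin (s - r)) :
    Phiblk hrs M i j =
      affineChart (Fin.castLE hrs) (colIdx r s) ((Matrix.comp _ _ _ _ ℂ).symm M) i j := by
  change (Matrix.comp _ _ _ _ ℂ).symm ((Asq hrs M)⁻¹ * M) i (colIdx r s j) = _
  rw [comp_symm_mul, comp_symm_inv]
  rfl

theorem Gmap_eq_crossRatio (hrs : r ≤ s) (hr : 0 < r) (hsr : 0 < s - r)
    (M : Matrix (Fin r × Fin d) (Fin s × Fin d) ℂ) (i : Fin r) (j : Fin (s - r)) :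
    Gmap hrs hr hsr M i j =
      crossRatio (affineChart (Fin.castLE hrs) (colIdx r s) ((Matrix.comp _ _ _ _ ℂ).symm M))
        ⟨0, hr⟩ ⟨0, hsr⟩ i j := by
  simp only [Gmap, crossRatio, Phiblk_eq_affineChart, Matrix.nonsing_inv_eq_ringInverse]

end Comp

/-- `I_{αβ}(M) = Tr (G_{α₁β₁}(M) ⋯ G_{α_kβ_k}(M))` is invariant under
`M ↦ g · M · diag (h 1, …, h s)`. -/
theorem stmt15 (d r s : ℕ) (hd : 0 < d) (hr : 0 < r) (hs : r < s)
    (k : ℕ) (hk : 0 < k) (α : Fin k → Fin r) (β : Fin k → Fin (s - r))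
    (hα : ∀ l, α l ≠ ⟨0, hr⟩) (hβ : ∀ l, β l ≠ ⟨0, by omega⟩)
    (M : Matrix (Fin r × Fin d) (Fin s × Fin d) ℂ)
    (hA : IsUnit (Asq hs.le M))
    (hα1 : ∀ l, IsUnit (Phiblk hs.le M (α l) ⟨0, by omega⟩))
    (h1β : ∀ l, IsUnit (Phiblk hs.le M ⟨0, hr⟩ (β l)))
    (g : Matrix (Fin r × Fin d) (Fin r × Fin d) ℂ) (hg : IsUnit g)
    (h : Fin s → Matrix (Fin d) (Fin d) ℂ) (hh : ∀ t, IsUnit (h t)) :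
    Matrix.trace
        (List.ofFn fun l =>
          Gmap hs.le hr (by omega) (g * M * blockDiag h) (α l) (β l)).prod =
      Matrix.trace (List.ofFn fun l => Gmap hs.le hr (by omega) M (α l) (β l)).prod := by
  simp only [Phiblk_eq_affineChart] at hα1 h1β
  lift h to Fin s → (Matrix (Fin d) (Fin d) ℂ)ˣ using hh
  have hA' : IsUnit (((Matrix.comp _ _ _ _ ℂ).symm M).submatrix id (Fin.castLE hs.le)) :=
    (Matrix.isUnit_comp_symm_iff _ _ _).2 hA
  obtain ⟨u, hu⟩ := (Matrix.isUnit_comp_symm_iff _ _ _).2 hg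
  simp only [Gmap_eq_crossRatio, comp_symm_mul, comp_symm_blockDiag, ← hu]
  exact stmt15_general Matrix.trace Matrix.trace_mul_comm _ _ _ _ α β _ hA' hα1 h1β u h
end
end

section
/- Let n = (2r+1)e and d = 2e for positive integers r, e. The group GL_n(ℂ) acts transitively on the set of (r+1)-tuples (V_1,…,V_{r+1}) of d-dimensional subspaces of ℂ^n such that V_1,…,V_r are independent and V_{r+1} is in general position with respect to (V_1,…,V_r): for any two such tuples (V_1,…,V_{r+1}) and (V'_1,…,V'_{r+1}) there exists g ∈ GL_n(ℂ) with g(V_i) = V'_i for all i = 1,…,r+1. -/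
noncomputable section

open Module

/-- The family `E` is independent: the natural sum map is injective,
i.e. `F = E 0 + ⋯ + E (r-1)` is a direct sum. -/
def IndepFam {n r : ℕ} (E : Fin r → Submodule ℂ (Fin n → ℂ)) : Prop :=
  Function.Injective fun f : (i : Fin r) → E i => ∑ i, (f i : Fin n → ℂ)

/-- General position of `V` with respect to independent subspaces `E 0, …, E (r-1)`
(case `n = (2r+1)e`, `d = 2e`): the intersection `W = V ⊓ F` with `F = ⨆ i, E i`
has dimension `e`, and for each `i` the projection of `F` onto `E i` (whose kernel
is `⨆ j ≠ i, E j`) restricts to an injective map on `W`. -/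
def GenPosHalf {n r : ℕ} (e : ℕ) (E : Fin r → Submodule ℂ (Fin n → ℂ))
    (V : Submodule ℂ (Fin n → ℂ)) : Prop :=
  finrank ℂ (V ⊓ (⨆ i, E i) : Submodule ℂ (Fin n → ℂ)) = e ∧
    ∀ i : Fin r, (V ⊓ (⨆ j, E j)) ⊓ (⨆ j, ⨆ (_ : j ≠ i), E j) = ⊥

/-!
Let `F = ⨆ i, V i` and let `C` be a complement of `W ⊓ F` in `W`; the family consisting of `C` and
the `V i` is independent. Choose any isomorphism `u` from `W ⊓ F` onto `W' ⊓ F'`. General position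
embeds `W ⊓ F` into each `V i`, so `u` can be transported to isomorphisms `V i ≃ V' i`, and by
additivity their sum restricts to `u`. Together with any isomorphism `C ≃ C'` they extend to an
automorphism of the whole space.
-/

theorem iSupIndep_option_elim {α ι : Type*} [CompleteLattice α] [IsModularLattice α]
    {a : α} {t : ι → α} (ht : iSupIndep t) (ha : Disjoint (⨆ i, t i) a) :
    iSupIndep fun o : Option ι => o.elim a t := by
  rw [iSupIndep_def]
  rintro (_ | i)
  · simpa [iSup_option] using ha.symm
  · have split : t i ⊔ ⨆ (j) (_ : j ≠ i), t j ≤ ⨆ j, t j :=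
      sup_le (le_iSup t i) (iSup₂_le fun j _ => le_iSup t j)
    simpa [iSup_option, sup_comm] using
      (ht i).disjoint_sup_right_of_disjoint_sup_left (ha.mono_left split)

theorem map_eq_of_forall_eq {R E E' : Type*} [Semiring R] [AddCommMonoid E] [Module R E]
    [AddCommMonoid E'] [Module R E'] {A : Submodule R E} {A' : Submodule R E'}
    (G : E →ₗ[R] E') (g : A ≃ₗ[R] A') (h : ∀ x : A, G x = g x) : A.map G = A' := by
  have hcomp : G ∘ₗ A.subtype = A'.subtype ∘ₗ g.toLinearMap := LinearMap.ext h
  rw [← A.range_subtype, ← LinearMap.range_comp, hcomp, LinearEquiv.range_comp, A'.range_subtype]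

theorem injective_of_sum_eq_of_disjoint {R E ι : Type*} [Ring R] [AddCommGroup E] [Module R E]
    [Fintype ι] {V : ι → Submodule R E} {U : Submodule R E} {q : U →ₗ[R] ((i : ι) → V i)}
    (hq : ∀ x, ∑ i, (q x i : E) = x) {i : ι} (hU : Disjoint U (⨆ (j) (_ : j ≠ i), V j)) :
    Function.Injective (LinearMap.proj i ∘ₗ q) := by
  rw [injective_iff_map_eq_zero]
  intro x hx
  have hxi : q x i = 0 := hx
  have hmem : (x : E) ∈ ⨆ (j) (_ : j ≠ i), V j := by
    rw [← hq]
    refine Submodule.sum_mem _ fun j _ => ?_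
    obtain rfl | hj := eq_or_ne j i
    · simp [hxi]
    · exact Submodule.mem_iSup_of_mem j (Submodule.mem_iSup_of_mem hj (q x j).2)
  exact Subtype.ext (Submodule.disjoint_def.mp hU x x.2 hmem)

section DivisionRing

variable {K E ι : Type*} [DivisionRing K] [AddCommGroup E] [Module K E]

theorem exists_linearEquiv_comp_eq {X A A' : Type*} [AddCommGroup X] [Module K X]
    [FiniteDimensional K X] [AddCommGroup A] [Module K A] [AddCommGroup A'] [Module K A']
    (e : A ≃ₗ[K] A') {f : X →ₗ[K] A} {f' : X →ₗ[K] A'}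
    (hf : Function.Injective f) (hf' : Function.Injective f') :
    ∃ g : A ≃ₗ[K] A', ∀ x, g (f x) = f' x := by
  have hef : Function.Injective (e.toLinearMap ∘ₗ f) := e.injective.comp hf
  obtain ⟨k, hk⟩ := Submodule.exists_linearEquiv_restrict_eq
    ((LinearEquiv.ofInjective _ hef).symm ≪≫ₗ LinearEquiv.ofInjective f' hf')
  refine ⟨e ≪≫ₗ k, fun x => ?_⟩
  simpa using (hk (LinearEquiv.ofInjective _ hef x)).symm

theorem exists_linearEquiv_forall_restrict_eq [Finite ι] {V V' : ι → Submodule K E}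
    [∀ i, FiniteDimensional K (V i)] (hV : iSupIndep V) (hV' : iSupIndep V')
    (g : ∀ i, V i ≃ₗ[K] V' i) :
    ∃ G : E ≃ₗ[K] E, ∀ i (x : V i), G x = g i x := by
  classical
  have := Fintype.ofFinite ι
  have : FiniteDimensional K (Π₀ i, V i) :=
    (DFinsupp.linearEquivFunOnFintype (R := K)).symm.finiteDimensional
  let S := LinearEquiv.ofInjective _ hV.dfinsupp_lsum_injective
  let S' := LinearEquiv.ofInjective _ hV'.dfinsupp_lsum_injective
  obtain ⟨G, hG⟩ := Submodule.exists_linearEquiv_restrict_eq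
    (S.symm ≪≫ₗ DFinsupp.mapRange.linearEquiv g ≪≫ₗ S')
  refine ⟨G, fun i x => ?_⟩
  simpa [S, S'] using (hG (S (DFinsupp.single i x))).symm

theorem exists_linearEquiv_restrict_eq_and_forall_restrict_eq [Finite ι]
    {V V' : ι → Submodule K E} {C C' : Submodule K E}
    [∀ i, FiniteDimensional K (V i)] [FiniteDimensional K C]
    (hV : iSupIndep V) (hV' : iSupIndep V')
    (hC : Disjoint (⨆ i, V i) C) (hC' : Disjoint (⨆ i, V' i) C')
    (g : ∀ i, V i ≃ₗ[K] V' i) (c : C ≃ₗ[K] C') :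
    ∃ G : E ≃ₗ[K] E, (∀ i (x : V i), G x = g i x) ∧ ∀ x : C, G x = c x := by
  have : ∀ o : Option ι, FiniteDimensional K (o.elim C V : Submodule K E) :=
    Option.forall.mpr ⟨‹FiniteDimensional K C›, ‹∀ i, FiniteDimensional K (V i)›⟩
  obtain ⟨G, hG⟩ := exists_linearEquiv_forall_restrict_eq
    (iSupIndep_option_elim hV hC) (iSupIndep_option_elim hV' hC')
    fun | none => c | some i => g i
  exact ⟨G, fun i => hG (some i), hG none⟩

theorem exists_linearMap_pi_sum_eq [Fintype ι] {V : ι → Submodule K E} {U : Submodule K E}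
    (hU : U ≤ ⨆ i, V i) :
    ∃ q : U →ₗ[K] ((i : ι) → V i), ∀ x, ∑ i, (q x i : E) = x := by
  classical
  rw [Submodule.iSup_eq_range_dfinsupp_lsum] at hU
  obtain ⟨s, hs⟩ := LinearMap.exists_rightInverse_of_surjective
    (DFinsupp.lsum ℕ fun i => (V i).subtype).rangeRestrict (LinearMap.range_rangeRestrict _)
  refine ⟨DFinsupp.linearEquivFunOnFintype.toLinearMap ∘ₗ s ∘ₗ Submodule.inclusion hU, fun x => ?_⟩
  have hx := congrArg Subtype.val (LinearMap.congr_fun hs (Submodule.inclusion hU x))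
  simpa [DFinsupp.sumAddHom_apply, DFinsupp.sum_eq_sum_fintype] using hx

theorem exists_linearEquiv_forall_extension_restrict_eq [Finite ι]
    {E' : Type*} [AddCommGroup E'] [Module K E'] {V : ι → Submodule K E} {V' : ι → Submodule K E'}
    {U : Submodule K E} {U' : Submodule K E'} [FiniteDimensional K U]
    (hUV : U ≤ ⨆ i, V i) (hUV' : U' ≤ ⨆ i, V' i)
    (hU : ∀ i, Disjoint U (⨆ (j) (_ : j ≠ i), V j))
    (hU' : ∀ i, Disjoint U' (⨆ (j) (_ : j ≠ i), V' j))
    (e : ∀ i, V i ≃ₗ[K] V' i) (u : U ≃ₗ[K] U') :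
    ∃ g : ∀ i, V i ≃ₗ[K] V' i,
      ∀ G : E →ₗ[K] E', (∀ i (x : V i), G x = g i x) → ∀ x : U, G x = u x := by
  have := Fintype.ofFinite ι
  obtain ⟨q, hq⟩ := exists_linearMap_pi_sum_eq hUV
  obtain ⟨q', hq'⟩ := exists_linearMap_pi_sum_eq hUV'
  have transport (i) : ∃ g : V i ≃ₗ[K] V' i, ∀ x, g (q x i) = q' (u x) i :=
    exists_linearEquiv_comp_eq (e i)
      (f := LinearMap.proj i ∘ₗ q) (f' := LinearMap.proj i ∘ₗ q' ∘ₗ u.toLinearMap)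
      (injective_of_sum_eq_of_disjoint hq (hU i))
      ((injective_of_sum_eq_of_disjoint hq' (hU' i)).comp u.injective)
  choose g hg using transport
  refine ⟨g, fun G hG x => ?_⟩
  calc G x = ∑ i, G (q x i) := by rw [← map_sum, hq]
    _ = ∑ i, (q' (u x) i : E') := by simp only [hG, hg]
    _ = u x := hq' (u x)

theorem exists_disjoint_sup_eq_finrank_add_eq (W F : Submodule K E) [FiniteDimensional K W] :
    ∃ C ≤ W, Disjoint F C ∧ (W ⊓ F) ⊔ C = W ∧
      finrank K (W ⊓ F : Submodule K E) + finrank K C = finrank K W := by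
  obtain ⟨C, hdisj, hsup⟩ :=
    IsModularLattice.exists_disjoint_and_sup_eq (inf_le_left : W ⊓ F ≤ W)
  have hCW : C ≤ W := hsup ▸ le_sup_right
  have := Submodule.finiteDimensional_of_le hCW
  have hfin := Submodule.finrank_sup_add_finrank_inf_eq (W ⊓ F) C
  rw [hsup, hdisj.eq_bot, finrank_bot, add_zero] at hfin
  refine ⟨C, hCW, ?_, hsup, hfin.symm⟩
  rw [disjoint_iff_inf_le] at hdisj ⊢
  exact (le_inf (le_inf (inf_le_right.trans hCW) inf_le_left) inf_le_right).trans hdisj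

theorem stmt19_general [Finite ι] {V V' : ι → Submodule K E} {W W' : Submodule K E}
    [∀ i, FiniteDimensional K (V i)] [∀ i, FiniteDimensional K (V' i)]
    [FiniteDimensional K W] [FiniteDimensional K W']
    (hV : ∀ i, finrank K (V i) = finrank K (V' i)) (hW : finrank K W = finrank K W')
    (hind : iSupIndep V) (hind' : iSupIndep V')
    (hWV : finrank K (W ⊓ ⨆ i, V i : Submodule K E) = finrank K (W' ⊓ ⨆ i, V' i : Submodule K E))
    (hgp : ∀ i, Disjoint (W ⊓ ⨆ j, V j) (⨆ (j) (_ : j ≠ i), V j))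
    (hgp' : ∀ i, Disjoint (W' ⊓ ⨆ j, V' j) (⨆ (j) (_ : j ≠ i), V' j)) :
    ∃ g : E ≃ₗ[K] E,
      (∀ i, (V i).map g.toLinearMap = V' i) ∧ W.map g.toLinearMap = W' := by
  obtain ⟨C, hCW, hC, hsup, hfin⟩ := exists_disjoint_sup_eq_finrank_add_eq W (⨆ i, V i)
  obtain ⟨C', hCW', hC', hsup', hfin'⟩ := exists_disjoint_sup_eq_finrank_add_eq W' (⨆ i, V' i)
  have := Submodule.finiteDimensional_of_le hCW
  have := Submodule.finiteDimensional_of_le hCW'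
  let u := LinearEquiv.ofFinrankEq _ _ hWV
  let c : C ≃ₗ[K] C' := LinearEquiv.ofFinrankEq _ _ (by lia)
  obtain ⟨g, hg⟩ := exists_linearEquiv_forall_extension_restrict_eq inf_le_right inf_le_right
    hgp hgp' (fun i => LinearEquiv.ofFinrankEq _ _ (hV i)) u
  obtain ⟨G, hGV, hGC⟩ :=
    exists_linearEquiv_restrict_eq_and_forall_restrict_eq hind hind' hC hC' g c
  refine ⟨G, fun i => map_eq_of_forall_eq _ (g i) (hGV i), ?_⟩
  rw [← hsup, Submodule.map_sup, map_eq_of_forall_eq _ u (hg _ hGV),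
    map_eq_of_forall_eq _ c hGC, hsup']

end DivisionRing

theorem IndepFam.iSupIndep {n r : ℕ} {V : Fin r → Submodule ℂ (Fin n → ℂ)} (hV : IndepFam V) :
    iSupIndep V := by
  refine iSupIndep_of_dfinsupp_lsum_injective V fun f f' h => ?_
  refine DFunLike.coe_injective (hV ?_)
  simpa [DFinsupp.sumAddHom_apply, DFinsupp.sum_eq_sum_fintype] using h

/-- GL_n(ℂ) acts transitively on (r+1)-tuples consisting of r independent
d-dimensional subspaces together with one more d-dimensional subspace in
general position (n = (2r+1)e, d = 2e). -/
theorem stmt19 (r e : ℕ) (hr : 0 < r) (he : 0 < e) (n d : ℕ)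
    (hn : n = (2 * r + 1) * e) (hd : d = 2 * e)
    (V V' : Fin r → Submodule ℂ (Fin n → ℂ))
    (W W' : Submodule ℂ (Fin n → ℂ))
    (hV : ∀ i, finrank ℂ (V i) = d) (hV' : ∀ i, finrank ℂ (V' i) = d)
    (hW : finrank ℂ W = d) (hW' : finrank ℂ W' = d)
    (hind : IndepFam V) (hind' : IndepFam V')
    (hgp : GenPosHalf e V W) (hgp' : GenPosHalf e V' W') :
    ∃ g : (Fin n → ℂ) ≃ₗ[ℂ] (Fin n → ℂ),
      (∀ i, (V i).map g.toLinearMap = V' i) ∧ W.map g.toLinearMap = W' := by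
  exact stmt19_general (fun i => (hV i).trans (hV' i).symm) (hW.trans hW'.symm)
    hind.iSupIndep hind'.iSupIndep (hgp.1.trans hgp'.1.symm)
    (fun i => disjoint_iff.mpr (hgp.2 i)) (fun i => disjoint_iff.mpr (hgp'.2 i))
end
end
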